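/- Let m ≥ 1, let Σ and Σ̃ be m×m real matrices, and let (Ψ_j)_{j≥0} and (Ψ̃_j)_{j≥0} be sequences of m×m real matrices with ∑_{j≥0} ‖Ψ_j‖_F ≤ M and ∑_{j≥0} ‖Ψ̃_j‖_F ≤ M for some M > 0. Then the series Γ = ∑_{j≥0} Ψ_j Σ Ψ_jᵀ and Γ̃ = ∑_{j≥0} Ψ̃_j Σ̃ Ψ̃_jᵀ converge absolutely in Frobenius norm, and ‖Γ̃ − Γ‖_F ≤ 2 M ‖Σ̃‖_F ∑_{j≥0} ‖Ψ̃_j − Ψ_j‖_F + M² ‖Σ̃ − Σ‖_F. -/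

import Mathlib

/-!
With `D = Ψ' - Ψ`, each term of the difference of the two series telescopes as
`Ψ' S' Ψ'ᵀ - Ψ S Ψᵀ = D S' Ψ'ᵀ + Ψ S' Dᵀ + Ψ (S' - S) Ψᵀ`.
The Frobenius norm is submultiplicative and invariant under transposition, and every `‖Ψ j‖` and
`‖Ψ' j‖` is at most `M` because the norms sum to at most `M`. Hence the `j`-th difference has norm at
most `2 M ‖S'‖ ‖D j‖ + M ‖S' - S‖ ‖Ψ j‖`, and summing over `j` gives the bound.
The argument is run with Mathlib's Frobenius norm, which `frobNorm_eq_norm` identifies with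
`frobNorm`.
-/

open scoped Matrix

/-- The Frobenius norm of a real `m × m` matrix. -/
noncomputable def frobNorm {m : ℕ} (A : Matrix (Fin m) (Fin m) ℝ) : ℝ :=
  Real.sqrt (∑ j, ∑ k, (A j k) ^ 2)

section Frobenius

attribute [local instance] Matrix.frobeniusNormedAddCommGroup Matrix.frobeniusNormedSpace
  Matrix.frobeniusNormedRing

lemma frobNorm_eq_norm {m : ℕ} (A : Matrix (Fin m) (Fin m) ℝ) : frobNorm A = ‖A‖ := by
  rw [Matrix.frobenius_norm_def, frobNorm, Real.sqrt_eq_rpow]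
  simp

lemma norm_sandwich_le {m : ℕ} (A B C : Matrix (Fin m) (Fin m) ℝ) :
    ‖A * B * Cᵀ‖ ≤ ‖A‖ * ‖B‖ * ‖C‖ := by
  calc ‖A * B * Cᵀ‖ ≤ ‖A * B‖ * ‖Cᵀ‖ := Matrix.frobenius_norm_mul _ _
    _ ≤ ‖A‖ * ‖B‖ * ‖C‖ := by
      rw [Matrix.frobenius_norm_transpose]
      gcongr
      exact Matrix.frobenius_norm_mul _ _

lemma summable_norm_sandwich {m : ℕ} (S : Matrix (Fin m) (Fin m) ℝ)
    {Ψ : ℕ → Matrix (Fin m) (Fin m) ℝ} {M : ℝ} (hs : Summable fun j => ‖Ψ j‖)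
    (hb : ∀ j, ‖Ψ j‖ ≤ M) : Summable fun j => ‖Ψ j * S * (Ψ j)ᵀ‖ := by
  refine Summable.of_nonneg_of_le (fun _ => norm_nonneg _) (fun j => ?_)
    (hs.mul_right (‖S‖ * M))
  calc _ ≤ ‖Ψ j‖ * ‖S‖ * ‖Ψ j‖ := norm_sandwich_le _ _ _
    _ ≤ ‖Ψ j‖ * ‖S‖ * M := by gcongr; exact hb j
    _ = _ := by ring

/-- The one-term perturbation bound, from the three-term telescoping of the difference. -/
lemma norm_sandwich_sub_le {m : ℕ} {S S' P P' : Matrix (Fin m) (Fin m) ℝ} {M : ℝ}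
    (hP : ‖P‖ ≤ M) (hP' : ‖P'‖ ≤ M) :
    ‖P' * S' * P'ᵀ - P * S * Pᵀ‖ ≤
      2 * M * ‖S'‖ * ‖P' - P‖ + M * ‖S' - S‖ * ‖P‖ := by
  have key : P' * S' * P'ᵀ - P * S * Pᵀ =
      (P' - P) * S' * P'ᵀ + P * S' * (P' - P)ᵀ + P * (S' - S) * Pᵀ := by
    rw [Matrix.transpose_sub]
    noncomm_ring
  rw [key]
  calc _ ≤ ‖(P' - P) * S' * P'ᵀ‖ + ‖P * S' * (P' - P)ᵀ‖ + ‖P * (S' - S) * Pᵀ‖ :=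
        norm_add₃_le
    _ ≤ ‖P' - P‖ * ‖S'‖ * ‖P'‖ + ‖P‖ * ‖S'‖ * ‖P' - P‖ + ‖P‖ * ‖S' - S‖ * ‖P‖ := by
        gcongr <;> exact norm_sandwich_le _ _ _
    _ ≤ ‖P' - P‖ * ‖S'‖ * M + M * ‖S'‖ * ‖P' - P‖ + M * ‖S' - S‖ * ‖P‖ := by
        gcongr
    _ = _ := by ring

theorem movingAverage_norm_aux {m : ℕ} (S S' : Matrix (Fin m) (Fin m) ℝ)
    (Ψ Ψ' : ℕ → Matrix (Fin m) (Fin m) ℝ) (M : ℝ) (hM : 0 < M)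
    (hs : Summable fun j => ‖Ψ j‖) (hs' : Summable fun j => ‖Ψ' j‖)
    (hΨ : ∑' j, ‖Ψ j‖ ≤ M) (hΨ' : ∑' j, ‖Ψ' j‖ ≤ M) :
    (Summable fun j => ‖Ψ j * S * (Ψ j)ᵀ‖) ∧ (Summable fun j => ‖Ψ' j * S' * (Ψ' j)ᵀ‖) ∧
    ‖(∑' j, Ψ' j * S' * (Ψ' j)ᵀ) - ∑' j, Ψ j * S * (Ψ j)ᵀ‖
      ≤ 2 * M * ‖S'‖ * (∑' j, ‖Ψ' j - Ψ j‖) + M ^ 2 * ‖S' - S‖ := by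
  have hb : ∀ j, ‖Ψ j‖ ≤ M := fun j =>
    (hs.le_tsum j fun _ _ => norm_nonneg _).trans hΨ
  have hb' : ∀ j, ‖Ψ' j‖ ≤ M := fun j =>
    (hs'.le_tsum j fun _ _ => norm_nonneg _).trans hΨ'
  have h1 := summable_norm_sandwich S hs hb
  have h2 := summable_norm_sandwich S' hs' hb'
  refine ⟨h1, h2, ?_⟩
  -- The series are taken in the product topology, which the Frobenius norm induces definitionally.
  have hs1 : Summable fun j => Ψ j * S * (Ψ j)ᵀ := h1.of_norm
  have hs2 : Summable fun j => Ψ' j * S' * (Ψ' j)ᵀ := h2.of_norm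
  have hd : Summable fun j => ‖Ψ' j - Ψ j‖ :=
    Summable.of_nonneg_of_le (fun _ => norm_nonneg _) (fun j => norm_sub_le _ _) (hs'.add hs)
  have hD := hd.mul_left (2 * M * ‖S'‖)
  have hE := hs.mul_left (M * ‖S' - S‖)
  rw [← hs2.tsum_sub hs1]
  calc _ ≤ ∑' j, (2 * M * ‖S'‖ * ‖Ψ' j - Ψ j‖ + M * ‖S' - S‖ * ‖Ψ j‖) :=
        tsum_of_norm_bounded (hD.add hE).hasSum fun j => norm_sandwich_sub_le (hb j) (hb' j)
    _ = 2 * M * ‖S'‖ * (∑' j, ‖Ψ' j - Ψ j‖) + M * ‖S' - S‖ * ∑' j, ‖Ψ j‖ := by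
        rw [hD.tsum_add hE, tsum_mul_left, tsum_mul_left]
    _ ≤ 2 * M * ‖S'‖ * (∑' j, ‖Ψ' j - Ψ j‖) + M * ‖S' - S‖ * M := by gcongr
    _ = _ := by ring

end Frobenius

/-- (Core of Lemma 7.1.) If `∑_j ‖Ψ_j‖_F ≤ M` and `∑_j ‖Ψ̃_j‖_F ≤ M`,
then the series `Γ = ∑_j Ψ_j Σ Ψ_jᵀ` and `Γ̃ = ∑_j Ψ̃_j Σ̃ Ψ̃_jᵀ` converge absolutely in
Frobenius norm and
`‖Γ̃ − Γ‖_F ≤ 2 M ‖Σ̃‖_F ∑_j ‖Ψ̃_j − Ψ_j‖_F + M² ‖Σ̃ − Σ‖_F`. -/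
theorem movingAverage_covariance_perturbation
    (m : ℕ) (hm : 1 ≤ m) (S S' : Matrix (Fin m) (Fin m) ℝ)
    (Ψ Ψ' : ℕ → Matrix (Fin m) (Fin m) ℝ) (M : ℝ) (hM : 0 < M)
    (hΨsummable : Summable (fun j : ℕ => frobNorm (Ψ j)))
    (hΨ'summable : Summable (fun j : ℕ => frobNorm (Ψ' j)))
    (hΨ : ∑' j : ℕ, frobNorm (Ψ j) ≤ M)
    (hΨ' : ∑' j : ℕ, frobNorm (Ψ' j) ≤ M) :
    Summable (fun j : ℕ => frobNorm (Ψ j * S * (Ψ j)ᵀ)) ∧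
    Summable (fun j : ℕ => frobNorm (Ψ' j * S' * (Ψ' j)ᵀ)) ∧
    frobNorm ((∑' j : ℕ, Ψ' j * S' * (Ψ' j)ᵀ) - ∑' j : ℕ, Ψ j * S * (Ψ j)ᵀ)
      ≤ 2 * M * frobNorm S' * (∑' j : ℕ, frobNorm (Ψ' j - Ψ j))
        + M ^ 2 * frobNorm (S' - S) := by
  simp only [frobNorm_eq_norm] at *
  exact movingAverage_norm_aux S S' Ψ Ψ' M hM hΨsummable hΨ'summable hΨ hΨ'
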